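/- arXiv:1903.10191 — 2 statements merged into one kernel-verified Lean document; each statement's English description precedes it below -/
import Mathlib

section
/- Let d ≥ 1, 1 ≤ q, p ≤ ∞ and ρ > 0, with q', p' the conjugate exponents of q, p. For all locally integrable functions f, g on ℝ^d one has the Hölder inequality ‖fg‖_{L^1} ≤ _ρ‖f‖_{q,p} · _ρ‖g‖_{q',p'}. -/
/-!
The cubes `I^ρ_k` cover `ℝ^d`, so `‖fg‖_{L^1}` is at most the sum over `k` of the integrals of
`|fg|` over the cubes. Hölder's inequality with exponents `q, q'` on each cube bounds the `k`-th
term by `‖f χ_{I^ρ_k}‖_q ‖g χ_{I^ρ_k}‖_{q'}` (`eLpNorm_mul_cube_le`), and Hölder's inequality for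
families indexed by `ℤ^d` with exponents `p, p'` (`tsum_mul_le_amalgam`) bounds the sum of these
products by the product of the amalgam norms.
-/

open MeasureTheory Filter Topology ENNReal

noncomputable section

/-- Dilation operator `St^{(α)}_ρ f (x) = ρ^{-d/α} f(x/ρ)` on functions on `ℝ^d`. -/
def St (d : ℕ) (α : ℝ≥0∞) (ρ : ℝ) (f : (Fin d → ℝ) → ℂ) : (Fin d → ℝ) → ℂ :=
  fun x => (ρ ^ (-(d : ℝ) * (1 / α).toReal) : ℝ) • f (ρ⁻¹ • x)

/-- The cube `I^ρ_k = Π_j [k_j ρ, (k_j+1) ρ)`. -/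
def cube (d : ℕ) (ρ : ℝ) (k : Fin d → ℤ) : Set (Fin d → ℝ) :=
  Set.univ.pi fun j => Set.Ico ((k j : ℝ) * ρ) (((k j : ℝ) + 1) * ρ)

/-- The amalgam norm `_ρ‖f‖_{q,p}`. -/
def amalgamNorm (d : ℕ) (q p : ℝ≥0∞) (ρ : ℝ) (f : (Fin d → ℝ) → ℂ) : ℝ≥0∞ :=
  if p = ∞ then ⨆ k : Fin d → ℤ, eLpNorm ((cube d ρ k).indicator f) q volume
  else (∑' k : Fin d → ℤ,
      (eLpNorm ((cube d ρ k).indicator f) q volume) ^ p.toReal) ^ (1 / p.toReal)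

/-- The Fofana norm `‖f‖_{q,p,α} = sup_{ρ>0} ρ^{d(1/α-1/q)} · _ρ‖f‖_{q,p}`. -/
def fofanaNorm (d : ℕ) (q p α : ℝ≥0∞) (f : (Fin d → ℝ) → ℂ) : ℝ≥0∞ :=
  ⨆ (ρ : ℝ) (_ : 0 < ρ),
    ENNReal.ofReal (ρ ^ ((d : ℝ) * ((1 / α).toReal - (1 / q).toReal))) *
      amalgamNorm d q p ρ f

/-- `{(c n, ρ n, g n)}` is an 𝔥-decomposition of `f` (for the space `𝓗(q,p,α)`,
here parametrized by the conjugate exponents `q', p', α'`):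
`Σ |c_n| < ∞`, each `g n` is in the unit ball of the amalgam space `(L^{q'}, ℓ^{p'})`,
and `f = Σ_n c_n St^{(α')}_{ρ_n} g_n` in the sense of `L^1_loc`. -/
structure IsHDecomp (d : ℕ) (q' p' α' : ℝ≥0∞) (f : (Fin d → ℝ) → ℂ)
    (c : ℕ → ℂ) (ρ : ℕ → ℝ) (g : ℕ → (Fin d → ℝ) → ℂ) : Prop where
  summable : Summable fun n => ‖c n‖
  rho_pos : ∀ n, 0 < ρ n
  loc_int : ∀ n, LocallyIntegrable (g n) volume
  norm_le : ∀ n, amalgamNorm d q' p' 1 (g n) ≤ 1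
  f_loc_int : LocallyIntegrable f volume
  tendsto : ∀ K : Set (Fin d → ℝ), IsCompact K →
    Tendsto (fun m => ∫ x in K, ‖(∑ n ∈ Finset.range m, c n • St d α' (ρ n) (g n)) x - f x‖)
      atTop (𝓝 0)

/-- Membership in the space `𝓗(q,p,α)` (parametrized by conjugate exponents). -/
def MemH (d : ℕ) (q' p' α' : ℝ≥0∞) (f : (Fin d → ℝ) → ℂ) : Prop :=
  ∃ c ρ g, IsHDecomp d q' p' α' f c ρ g

/-- The norm of `𝓗(q,p,α)`:  `inf Σ|c_n|` over all 𝔥-decompositions. -/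
def HNorm (d : ℕ) (q' p' α' : ℝ≥0∞) (f : (Fin d → ℝ) → ℂ) : ℝ≥0∞ :=
  sInf {s | ∃ c ρ g, IsHDecomp d q' p' α' f c ρ g ∧ s = ∑' n, ENNReal.ofReal ‖c n‖}

end

/-- Hölder's inequality for families in `ℝ≥0∞`, including the endpoint exponents `1` and `∞`, with
the `ℓ^p` norm written out as it appears in `amalgamNorm`. -/
theorem tsum_mul_le_amalgam {ι : Type*} (p p' : ℝ≥0∞) [ENNReal.HolderConjugate p p']
    (a b : ι → ℝ≥0∞) :
    ∑' k, a k * b k ≤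
      (if p = ∞ then ⨆ k, a k else (∑' k, a k ^ p.toReal) ^ (1 / p.toReal)) *
      (if p' = ∞ then ⨆ k, b k else (∑' k, b k ^ p'.toReal) ^ (1 / p'.toReal)) := by
  by_cases hp : p = ∞
  · have hp' : p' = 1 := by
      subst hp; exact ENNReal.HolderConjugate.unique ∞ p' 1
    simp only [hp, hp', if_true, ENNReal.one_ne_top, if_false, ENNReal.toReal_one,
      ENNReal.rpow_one, div_one]
    rw [← ENNReal.tsum_mul_left]
    exact ENNReal.tsum_le_tsum fun k => mul_le_mul_left (le_iSup a k) _
  by_cases hp' : p' = ∞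
  · have hp1 : p = 1 := by
      subst hp'
      have : ENNReal.HolderConjugate ∞ p := ENNReal.HolderConjugate.symm
      exact ENNReal.HolderConjugate.unique ∞ p 1
    simp only [hp1, hp', if_true, ENNReal.one_ne_top, if_false, ENNReal.toReal_one,
      ENNReal.rpow_one, div_one]
    rw [← ENNReal.tsum_mul_right]
    exact ENNReal.tsum_le_tsum fun k => mul_le_mul_right (le_iSup b k) _
  rw [if_neg hp, if_neg hp']
  let _ : MeasurableSpace ι := ⊤
  have h := ENNReal.lintegral_mul_le_Lp_mul_Lq (Measure.count : Measure ι)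
    (ENNReal.HolderConjugate.toReal_of_ne_top hp hp')
    (f := a) (g := b) measurable_from_top.aemeasurable measurable_from_top.aemeasurable
  simpa only [lintegral_count, Pi.mul_apply] using h

theorem measurableSet_cube (d : ℕ) (ρ : ℝ) (k : Fin d → ℤ) : MeasurableSet (cube d ρ k) :=
  MeasurableSet.univ_pi fun _ => measurableSet_Ico

theorem iUnion_cube (d : ℕ) {ρ : ℝ} (hρ : 0 < ρ) : ⋃ k, cube d ρ k = Set.univ := by
  refine Set.eq_univ_of_forall fun x => Set.mem_iUnion.2 ⟨fun j => ⌊x j / ρ⌋, fun j _ => ?_⟩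
  exact ⟨(le_div_iff₀ hρ).1 (Int.floor_le _), (div_lt_iff₀ hρ).1 (Int.lt_floor_add_one _)⟩

theorem eLpNorm_mul_cube_le (d : ℕ) (q q' : ℝ≥0∞) [ENNReal.HolderConjugate q q'] (ρ : ℝ)
    {f g : (Fin d → ℝ) → ℂ} (hf : AEStronglyMeasurable f volume)
    (hg : AEStronglyMeasurable g volume) (k : Fin d → ℤ) :
    ∫⁻ x in cube d ρ k, ‖f x * g x‖ₑ ≤
      eLpNorm ((cube d ρ k).indicator f) q volume *
        eLpNorm ((cube d ρ k).indicator g) q' volume := by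
  have hk := measurableSet_cube d ρ k
  rw [eLpNorm_indicator_eq_eLpNorm_restrict hk, eLpNorm_indicator_eq_eLpNorm_restrict hk,
    ← eLpNorm_one_eq_lintegral_enorm (f := fun x => f x * g x)]
  have h := eLpNorm_smul_le_mul_eLpNorm (p := q) (q := q') (r := 1)
    (hg.restrict (s := cube d ρ k)) (hf.restrict (s := cube d ρ k))
  exact h

/-- Hölder's inequality for amalgam norms:
`‖fg‖_{L^1} ≤ _ρ‖f‖_{q,p} · _ρ‖g‖_{q',p'}`. -/
theorem amalgam_holder
    (d : ℕ) (hd : 1 ≤ d) (q p q' p' : ℝ≥0∞) (hq : 1 ≤ q) (hp : 1 ≤ p)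
    (hqq' : 1 / q + 1 / q' = 1) (hpp' : 1 / p + 1 / p' = 1)
    (ρ : ℝ) (hρ : 0 < ρ)
    (f g : (Fin d → ℝ) → ℂ)
    (hf : LocallyIntegrable f volume) (hg : LocallyIntegrable g volume) :
    eLpNorm (fun x => f x * g x) 1 volume ≤
      amalgamNorm d q p ρ f * amalgamNorm d q' p' ρ g := by
  have : ENNReal.HolderConjugate q q' := ⟨by simpa using hqq'⟩
  have : ENNReal.HolderConjugate p p' := ⟨by simpa using hpp'⟩
  calc eLpNorm (fun x => f x * g x) 1 volume
      = ∫⁻ x in ⋃ k, cube d ρ k, ‖f x * g x‖ₑ := by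
        rw [iUnion_cube d hρ, setLIntegral_univ, eLpNorm_one_eq_lintegral_enorm]
    _ ≤ ∑' k, ∫⁻ x in cube d ρ k, ‖f x * g x‖ₑ := lintegral_iUnion_le _ _
    _ ≤ ∑' k, eLpNorm ((cube d ρ k).indicator f) q volume *
          eLpNorm ((cube d ρ k).indicator g) q' volume :=
        ENNReal.tsum_le_tsum fun k =>
          eLpNorm_mul_cube_le d q q' ρ hf.aestronglyMeasurable hg.aestronglyMeasurable k
    _ ≤ amalgamNorm d q p ρ f * amalgamNorm d q' p' ρ g := tsum_mul_le_amalgam p p' _ _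
end

section
/- Let d ≥ 1 and 1 ≤ q ≤ α ≤ p ≤ ∞. For g ∈ (L^q,ℓ^p)^α(ℝ^d), define T_g : 𝓗(q,p,α) → ℂ by ⟨T_g, f⟩ = ∫_{ℝ^d} f(x) g(x) dx. Then T_g is a bounded linear functional on 𝓗(q,p,α), the map g ↦ T_g is linear and bounded from (L^q,ℓ^p)^α(ℝ^d) into the dual space 𝓗(q,p,α)*, and its operator norm satisfies ‖T_g‖_{𝓗(q,p,α)*} ≤ ‖g‖_{q,p,α} for every g. -/
open MeasureTheory Filter Topology ENNReal

/-!
The heart of the matter is the pairing estimate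
`∫ |St^{(α')}_ρ h · g| ≤ ‖h‖_{q',p'} ‖g‖_{q,p,α}` (`lintegral_St_mul_le`), valid for every scale `ρ`.
Split the integral over the cubes `I^ρ_k`, apply Hölder with exponents `q', q` on each of them, and
rescale the first factor to the unit cube (`eLpNorm_indicator_cube_St`): this produces the power
`ρ^{-d/α' + d/q'} = ρ^{d(1/α - 1/q)}` of the Fofana norm. Hölder for series with exponents `p', p`
finishes the estimate.

If `f = ∑ c_n St_{ρ_n} h_n` in `L^1_loc`, a subsequence of the partial sums converges almost everywhere
on each ball, so `|f| ≤ ∑ |c_n| |St_{ρ_n} h_n|` almost everywhere (`IsHDecomp.ae_enorm_le`). Summing the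
pairing estimate gives `∫ |f g| ≤ ‖g‖_{q,p,α} ∑ |c_n|`. Hence `f g` is integrable, which makes the
pairing bilinear, and the infimum over all decompositions yields the norm bound.
-/

/-- The `ℓ^p` norm of a family of extended nonnegative numbers, with the supremum for `p = ∞`. -/
noncomputable def lpSum {ι : Type*} (p : ℝ≥0∞) (a : ι → ℝ≥0∞) : ℝ≥0∞ :=
  if p = ∞ then ⨆ k, a k else (∑' k, a k ^ p.toReal) ^ (1 / p.toReal)

theorem amalgamNorm_eq_lpSum (d : ℕ) (q p : ℝ≥0∞) (ρ : ℝ) (f : (Fin d → ℝ) → ℂ) :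
    amalgamNorm d q p ρ f = lpSum p fun k => eLpNorm ((cube d ρ k).indicator f) q volume := rfl

theorem tsum_mul_le_lpSum {ι : Type*} {p q : ℝ≥0∞} (h : ENNReal.HolderConjugate p q)
    (a b : ι → ℝ≥0∞) : ∑' k, a k * b k ≤ lpSum p a * lpSum q b := by
  by_cases hp : p = ∞
  · have hq : q = 1 := (ENNReal.HolderConjugate.eq_top_iff_eq_one p q).1 hp
    subst hp hq
    simp only [lpSum, if_true, ENNReal.one_ne_top, if_false, ENNReal.toReal_one, ENNReal.rpow_one,
      div_one]
    rw [← ENNReal.tsum_mul_left]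
    exact ENNReal.tsum_le_tsum fun k => by gcongr; exact le_iSup a k
  by_cases hq : q = ∞
  · have hp : p = 1 := (ENNReal.HolderConjugate.eq_top_iff_eq_one q p).1 hq
    subst hp hq
    simp only [lpSum, if_true, ENNReal.one_ne_top, if_false, ENNReal.toReal_one, ENNReal.rpow_one,
      div_one]
    rw [← ENNReal.tsum_mul_right]
    exact ENNReal.tsum_le_tsum fun k => by gcongr; exact le_iSup b k
  have hp1 : 1 < p := (ENNReal.HolderConjugate.lt_top_iff_one_lt q p).1 (lt_top_iff_ne_top.2 hq)
  have hpq : p.toReal.HolderConjugate q.toReal := by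
    rw [Real.holderConjugate_iff]
    refine ⟨by simpa using (ENNReal.toReal_lt_toReal ENNReal.one_ne_top hp).2 hp1, ?_⟩
    rw [← ENNReal.toReal_inv, ← ENNReal.toReal_inv, ← ENNReal.toReal_add,
      ENNReal.holderConjugate_iff.1 h, ENNReal.toReal_one]
    · exact ENNReal.inv_ne_top.2 (ENNReal.HolderConjugate.ne_zero p q)
    · exact ENNReal.inv_ne_top.2 (ENNReal.HolderConjugate.ne_zero q p)
  let _ : MeasurableSpace ι := ⊤
  have := ENNReal.lintegral_mul_le_Lp_mul_Lq (Measure.count : Measure ι) hpq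
    (f := a) (g := b) (measurable_from_top.aemeasurable) (measurable_from_top.aemeasurable)
  simpa only [lpSum, hp, hq, if_false, lintegral_count, Pi.mul_apply] using this

theorem mem_cube_iff {d : ℕ} {ρ : ℝ} (hρ : 0 < ρ) (k : Fin d → ℤ) (x : Fin d → ℝ) :
    x ∈ cube d ρ k ↔ ∀ j, ⌊x j / ρ⌋ = k j := by
  simp only [cube, Set.mem_univ_pi, Set.mem_Ico, Int.floor_eq_iff, le_div_iff₀ hρ, div_lt_iff₀ hρ]

/-- The cubes of side `ρ` tile the whole space. -/
theorem lintegral_eq_tsum_cube {d : ℕ} {ρ : ℝ} (hρ : 0 < ρ) (F : (Fin d → ℝ) → ℝ≥0∞) :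
    ∫⁻ x, F x = ∑' k, ∫⁻ x in cube d ρ k, F x := by
  have hU : ⋃ k, cube d ρ k = Set.univ := Set.eq_univ_of_forall fun x =>
    Set.mem_iUnion.2 ⟨fun j => ⌊x j / ρ⌋, (mem_cube_iff hρ _ _).2 fun _ => rfl⟩
  rw [← lintegral_iUnion (measurableSet_cube d ρ), hU, Measure.restrict_univ]
  intro k l hkl
  refine Set.disjoint_left.2 fun x hk hl => hkl ?_
  funext j
  rw [← (mem_cube_iff hρ _ _).1 hk j, (mem_cube_iff hρ _ _).1 hl j]

theorem locallyIntegrable_St {d : ℕ} {α : ℝ≥0∞} {ρ : ℝ} (hρ : 0 < ρ) {h : (Fin d → ℝ) → ℂ}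
    (hh : LocallyIntegrable h volume) : LocallyIntegrable (St d α ρ h) volume := by
  rw [locallyIntegrable_iff] at hh ⊢
  intro K hK
  refine Integrable.smul (ρ ^ (-(d : ℝ) * (1 / α).toReal) : ℝ) (f := fun x => h (ρ⁻¹ • x)) ?_
  have hρ' : ρ⁻¹ ≠ 0 := (inv_pos.2 hρ).ne'
  have hK' : IsCompact ((fun x : Fin d → ℝ => ρ⁻¹ • x) '' K) := hK.image (continuous_const_smul _)
  have h1 := (integrable_indicator_iff hK'.measurableSet).2 (hh _ hK')
  rw [← integrable_comp_smul_iff volume _ hρ'] at h1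
  refine (integrable_indicator_iff hK.measurableSet).1 (h1.congr (Eventually.of_forall fun x => ?_))
  have : ρ⁻¹ • x ∈ (fun x : Fin d → ℝ => ρ⁻¹ • x) '' K ↔ x ∈ K :=
    (smul_right_injective _ hρ').mem_set_image
  by_cases hx : x ∈ K <;> simp only [Set.indicator, this, hx, if_true, if_false]

/-- Rescaling to the unit cube:
`‖St^{(α')}_ρ h · χ_{I^ρ_k}‖_{q'} = ρ^{d(1/q' - 1/α')} ‖h χ_{I^1_k}‖_{q'}`. -/
theorem eLpNorm_indicator_cube_St {d : ℕ} {α' q' : ℝ≥0∞} {ρ : ℝ} (hρ : 0 < ρ)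
    (h : (Fin d → ℝ) → ℂ) (k : Fin d → ℤ) :
    eLpNorm ((cube d ρ k).indicator (St d α' ρ h)) q' volume =
      ENNReal.ofReal (ρ ^ ((d : ℝ) * ((1 / q').toReal - (1 / α').toReal))) *
        eLpNorm ((cube d 1 k).indicator h) q' volume := by
  have hρ' : ρ⁻¹ ≠ 0 := (inv_pos.2 hρ).ne'
  have key : (cube d ρ k).indicator (St d α' ρ h) =
      (ρ ^ (-(d : ℝ) * (1 / α').toReal) : ℝ) •
        ((cube d 1 k).indicator h ∘ fun x : Fin d → ℝ => ρ⁻¹ • x) := by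
    funext x
    have : ρ⁻¹ • x ∈ cube d 1 k ↔ x ∈ cube d ρ k := by
      rw [mem_cube_iff hρ, mem_cube_iff one_pos]
      simp [div_eq_inv_mul]
    by_cases hx : x ∈ cube d ρ k <;> simp [Set.indicator, this, hx, St]
  have hemb : MeasurableEmbedding fun x : Fin d → ℝ => ρ⁻¹ • x :=
    (Homeomorph.smulOfNeZero ρ⁻¹ hρ').measurableEmbedding
  have hpow : ENNReal.ofReal |((ρ⁻¹) ^ Module.finrank ℝ (Fin d → ℝ))⁻¹| =
      ENNReal.ofReal (ρ ^ (d : ℝ)) := by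
    rw [Module.finrank_fin_fun, inv_pow, inv_inv, abs_of_pos (pow_pos hρ _), Real.rpow_natCast]
  rw [key, eLpNorm_const_smul, ← hemb.eLpNorm_map_measure, Measure.map_addHaar_smul _ hρ', hpow,
    eLpNorm_smul_measure_of_ne_zero (ENNReal.ofReal_pos.2 (Real.rpow_pos_of_pos hρ _)).ne',
    ENNReal.ofReal_rpow_of_pos (Real.rpow_pos_of_pos hρ _), Real.enorm_eq_ofReal (by positivity),
    smul_eq_mul, ← mul_assoc, ← ENNReal.ofReal_mul (by positivity), ← Real.rpow_mul hρ.le,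
    ← Real.rpow_add hρ]
  congr 3
  ring

theorem lintegral_mul_le_eLpNorm {d : ℕ} {q q' : ℝ≥0∞} (hqq' : ENNReal.HolderConjugate q' q)
    {u v : (Fin d → ℝ) → ℂ} (hu : AEStronglyMeasurable u volume)
    (hv : AEStronglyMeasurable v volume) {s : Set (Fin d → ℝ)} (hs : MeasurableSet s) :
    ∫⁻ x in s, ‖u x‖ₑ * ‖v x‖ₑ ≤
      eLpNorm (s.indicator u) q' volume * eLpNorm (s.indicator v) q volume := by
  have := eLpNorm_smul_le_mul_eLpNorm (p := q') (q := q) (r := 1) hv.restrict (μ := volume.restrict s)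
    (φ := u) hu.restrict
  rw [eLpNorm_one_eq_lintegral_enorm] at this
  rw [eLpNorm_indicator_eq_eLpNorm_restrict hs, eLpNorm_indicator_eq_eLpNorm_restrict hs]
  simpa [enorm_mul] using this

/-- The pairing estimate: a dilated amalgam function pairs with `g` with constant the Fofana norm. -/
theorem lintegral_St_mul_le {d : ℕ} {q p α q' p' α' : ℝ≥0∞}
    (hqq' : 1 / q + 1 / q' = 1) (hpp' : 1 / p + 1 / p' = 1) (hαα' : 1 / α + 1 / α' = 1)
    {ρ : ℝ} (hρ : 0 < ρ) {g h : (Fin d → ℝ) → ℂ} (hg : LocallyIntegrable g volume)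
    (hh : LocallyIntegrable h volume) :
    ∫⁻ x, ‖St d α' ρ h x‖ₑ * ‖g x‖ₑ ≤ amalgamNorm d q' p' 1 h * fofanaNorm d q p α g := by
  have hq : ENNReal.HolderConjugate q' q := by
    rw [ENNReal.holderConjugate_iff, add_comm]; simpa using hqq'
  have hp : ENNReal.HolderConjugate p' p := by
    rw [ENNReal.holderConjugate_iff, add_comm]; simpa using hpp'
  have real_eq : ∀ a b : ℝ≥0∞, 1 / a + 1 / b = 1 → (1 / a).toReal + (1 / b).toReal = 1 := by
    intro a b hab
    have hle := ENNReal.add_eq_top.not.1 (hab ▸ ENNReal.one_ne_top)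
    push Not at hle
    rw [← ENNReal.toReal_add hle.1 hle.2, hab, ENNReal.toReal_one]
  have hexp : (1 / q').toReal - (1 / α').toReal = (1 / α).toReal - (1 / q).toReal := by
    linarith [real_eq _ _ hqq', real_eq _ _ hαα']
  set C := ENNReal.ofReal (ρ ^ ((d : ℝ) * ((1 / α).toReal - (1 / q).toReal))) with hC
  calc ∫⁻ x, ‖St d α' ρ h x‖ₑ * ‖g x‖ₑ
      = ∑' k, ∫⁻ x in cube d ρ k, ‖St d α' ρ h x‖ₑ * ‖g x‖ₑ := lintegral_eq_tsum_cube hρ _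
    _ ≤ ∑' k, C * (eLpNorm ((cube d 1 k).indicator h) q' volume *
          eLpNorm ((cube d ρ k).indicator g) q volume) := by
        refine ENNReal.tsum_le_tsum fun k => ?_
        refine (lintegral_mul_le_eLpNorm hq (locallyIntegrable_St hρ hh).aestronglyMeasurable
          hg.aestronglyMeasurable (measurableSet_cube d ρ k)).trans_eq ?_
        rw [eLpNorm_indicator_cube_St hρ, hexp, mul_assoc]
    _ ≤ C * (amalgamNorm d q' p' 1 h * amalgamNorm d q p ρ g) := by
        rw [ENNReal.tsum_mul_left]
        gcongr
        exact tsum_mul_le_lpSum hp _ _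
    _ = amalgamNorm d q' p' 1 h * (C * amalgamNorm d q p ρ g) := mul_left_comm _ _ _
    _ ≤ amalgamNorm d q' p' 1 h * fofanaNorm d q p α g := by
        gcongr
        exact le_iSup₂ (f := fun (r : ℝ) (_ : 0 < r) =>
          ENNReal.ofReal (r ^ ((d : ℝ) * ((1 / α).toReal - (1 / q).toReal))) *
            amalgamNorm d q p r g) ρ hρ

/-- Almost everywhere, `f` is dominated by the sum of the absolute values of the terms of any of
its decompositions. -/
theorem IsHDecomp.ae_enorm_le {d : ℕ} {q' p' α' : ℝ≥0∞} {f : (Fin d → ℝ) → ℂ} {c : ℕ → ℂ}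
    {ρ : ℕ → ℝ} {h : ℕ → (Fin d → ℝ) → ℂ} (H : IsHDecomp d q' p' α' f c ρ h) :
    ∀ᵐ x, ‖f x‖ₑ ≤ ∑' n, ‖c n‖ₑ * ‖St d α' (ρ n) (h n) x‖ₑ := by
  have hball : ∀ N : ℕ, ∀ᵐ x ∂volume.restrict (Metric.closedBall (0 : Fin d → ℝ) N),
      ‖f x‖ₑ ≤ ∑' n, ‖c n‖ₑ * ‖St d α' (ρ n) (h n) x‖ₑ := by
    intro N
    have hK := isCompact_closedBall (0 : Fin d → ℝ) N
    set μ := volume.restrict (Metric.closedBall (0 : Fin d → ℝ) N)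
    let S : ℕ → (Fin d → ℝ) → ℂ := fun m => ∑ n ∈ Finset.range m, c n • St d α' (ρ n) (h n)
    have hS : ∀ m, Integrable (S m) μ := fun m => integrable_finsetSum' _ fun n _ =>
      ((locallyIntegrable_St (H.rho_pos n) (H.loc_int n)).integrableOn_isCompact hK).smul (c n)
    have hf : Integrable f μ := H.f_loc_int.integrableOn_isCompact hK
    have hlim : Tendsto (fun m => eLpNorm (S m - f) 1 μ) atTop (𝓝 0) := by
      have h1 := ENNReal.tendsto_ofReal (H.tendsto _ hK)
      rw [ENNReal.ofReal_zero] at h1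
      refine h1.congr fun m => ?_
      rw [eLpNorm_one_eq_lintegral_enorm]
      exact ofReal_integral_norm_eq_lintegral_enorm ((hS m).sub hf)
    obtain ⟨ns, -, hns⟩ := (tendstoInMeasure_of_tendsto_eLpNorm one_ne_zero
      (fun m => (hS m).aestronglyMeasurable) hf.aestronglyMeasurable hlim).exists_seq_tendsto_ae
    filter_upwards [hns] with x hx
    refine le_of_tendsto' hx.enorm fun i => ?_
    calc ‖S (ns i) x‖ₑ ≤ ∑ n ∈ Finset.range (ns i), ‖c n‖ₑ * ‖St d α' (ρ n) (h n) x‖ₑ := by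
          simp only [S, Finset.sum_apply, Pi.smul_apply, smul_eq_mul]
          refine (enorm_sum_le _ _).trans_eq ?_
          simp only [enorm_mul]
      _ ≤ _ := ENNReal.sum_le_tsum _
  have := ae_all_iff.2 fun N => (ae_restrict_iff' Metric.isClosed_closedBall.measurableSet).1 (hball N)
  filter_upwards [this] with x hx
  obtain ⟨N, hN⟩ := exists_nat_ge ‖x‖
  exact hx N (by simpa using hN)

theorem IsHDecomp.lintegral_mul_le {d : ℕ} {q p α q' p' α' : ℝ≥0∞}
    (hqq' : 1 / q + 1 / q' = 1) (hpp' : 1 / p + 1 / p' = 1) (hαα' : 1 / α + 1 / α' = 1)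
    {f g : (Fin d → ℝ) → ℂ} (hg : LocallyIntegrable g volume) {c : ℕ → ℂ}
    {ρ : ℕ → ℝ} {h : ℕ → (Fin d → ℝ) → ℂ} (H : IsHDecomp d q' p' α' f c ρ h) :
    ∫⁻ x, ‖f x * g x‖ₑ ≤ fofanaNorm d q p α g * ∑' n, ENNReal.ofReal ‖c n‖ := by
  have hmeas : ∀ n, AEMeasurable (fun x => ‖St d α' (ρ n) (h n) x‖ₑ * ‖g x‖ₑ) volume := fun n =>
    (locallyIntegrable_St (H.rho_pos n) (H.loc_int n)).aestronglyMeasurable.enorm.mul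
      hg.aestronglyMeasurable.enorm
  calc ∫⁻ x, ‖f x * g x‖ₑ
      ≤ ∫⁻ x, ∑' n, ‖c n‖ₑ * (‖St d α' (ρ n) (h n) x‖ₑ * ‖g x‖ₑ) := by
        refine lintegral_mono_ae ?_
        filter_upwards [H.ae_enorm_le] with x hx
        simp only [enorm_mul, ← mul_assoc]
        rw [ENNReal.tsum_mul_right]
        gcongr
    _ = ∑' n, ‖c n‖ₑ * ∫⁻ x, ‖St d α' (ρ n) (h n) x‖ₑ * ‖g x‖ₑ := by
        rw [lintegral_tsum fun n => (hmeas n).const_mul _]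
        exact tsum_congr fun n => lintegral_const_mul'' _ (hmeas n)
    _ ≤ ∑' n, ‖c n‖ₑ * fofanaNorm d q p α g := by
        refine ENNReal.tsum_le_tsum fun n => ?_
        gcongr
        refine (lintegral_St_mul_le hqq' hpp' hαα' (H.rho_pos n) hg (H.loc_int n)).trans ?_
        exact mul_le_of_le_one_left zero_le (H.norm_le n)
    _ = fofanaNorm d q p α g * ∑' n, ENNReal.ofReal ‖c n‖ := by
        rw [ENNReal.tsum_mul_right, mul_comm]
        simp only [ofReal_norm]

theorem MemH.integrable_mul {d : ℕ} {q p α q' p' α' : ℝ≥0∞}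
    (hqq' : 1 / q + 1 / q' = 1) (hpp' : 1 / p + 1 / p' = 1) (hαα' : 1 / α + 1 / α' = 1)
    {f g : (Fin d → ℝ) → ℂ} (hg : LocallyIntegrable g volume) (hgf : fofanaNorm d q p α g ≠ ∞)
    (hf : MemH d q' p' α' f) : Integrable (fun x => f x * g x) volume := by
  obtain ⟨c, ρ, h, H⟩ := hf
  refine ⟨H.f_loc_int.aestronglyMeasurable.mul hg.aestronglyMeasurable, ?_⟩
  refine (H.lintegral_mul_le hqq' hpp' hαα' hg).trans_lt (ENNReal.mul_lt_top hgf.lt_top ?_)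
  exact H.summable.tsum_ofReal_lt_top

/-- For `g ∈ (L^q,ℓ^p)^α(ℝ^d)`, the functional `T_g : f ↦ ∫ f g` is a bounded linear
functional on `𝓗(q,p,α)` with `‖T_g‖ ≤ ‖g‖_{q,p,α}`, and `g ↦ T_g` is linear. -/
theorem Tg_bounded_linear
    (d : ℕ) (hd : 1 ≤ d) (q p α q' p' α' : ℝ≥0∞)
    (hq : 1 ≤ q) (hqα : q ≤ α) (hαp : α ≤ p)
    (hqq' : 1 / q + 1 / q' = 1) (hpp' : 1 / p + 1 / p' = 1) (hαα' : 1 / α + 1 / α' = 1) :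
    -- for each `g`, `T_g` is a bounded linear functional on `𝓗(q,p,α)`
    (∀ g : (Fin d → ℝ) → ℂ, LocallyIntegrable g volume → fofanaNorm d q p α g ≠ ∞ →
      (∀ f₁ f₂ : (Fin d → ℝ) → ℂ, MemH d q' p' α' f₁ → MemH d q' p' α' f₂ →
        ∫ x, (f₁ + f₂) x * g x = (∫ x, f₁ x * g x) + ∫ x, f₂ x * g x) ∧
      (∀ (a : ℂ) (f : (Fin d → ℝ) → ℂ), MemH d q' p' α' f →
        ∫ x, (a • f) x * g x = a * ∫ x, f x * g x) ∧
      (∀ f : (Fin d → ℝ) → ℂ, MemH d q' p' α' f →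
        ENNReal.ofReal ‖∫ x, f x * g x‖ ≤ fofanaNorm d q p α g * HNorm d q' p' α' f)) ∧
    -- `g ↦ T_g` is linear
    (∀ g₁ g₂ : (Fin d → ℝ) → ℂ, LocallyIntegrable g₁ volume → fofanaNorm d q p α g₁ ≠ ∞ →
      LocallyIntegrable g₂ volume → fofanaNorm d q p α g₂ ≠ ∞ →
      ∀ f : (Fin d → ℝ) → ℂ, MemH d q' p' α' f →
        ∫ x, f x * (g₁ + g₂) x = (∫ x, f x * g₁ x) + ∫ x, f x * g₂ x) ∧
    (∀ (a : ℂ) (g : (Fin d → ℝ) → ℂ), LocallyIntegrable g volume →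
      fofanaNorm d q p α g ≠ ∞ →
      ∀ f : (Fin d → ℝ) → ℂ, MemH d q' p' α' f →
        ∫ x, f x * (a • g) x = a * ∫ x, f x * g x) := by
  have key := fun (g : (Fin d → ℝ) → ℂ) (hg : LocallyIntegrable g volume)
    (hgf : fofanaNorm d q p α g ≠ ∞) (f : (Fin d → ℝ) → ℂ) (hf : MemH d q' p' α' f) =>
    hf.integrable_mul hqq' hpp' hαα' hg hgf
  refine ⟨fun g hg hgf => ⟨fun f₁ f₂ h₁ h₂ => ?_, fun a f _ => ?_, fun f hf => ?_⟩,
    fun g₁ g₂ hg₁ hgf₁ hg₂ hgf₂ f hf => ?_, fun a g _ _ f _ => ?_⟩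
  · rw [← integral_add (key g hg hgf f₁ h₁) (key g hg hgf f₂ h₂)]
    simp only [Pi.add_apply, add_mul]
  · rw [← integral_const_mul]
    simp only [Pi.smul_apply, smul_eq_mul, mul_assoc]
  · -- Membership of `f` makes the infimum run over a nonempty set, as needed when `‖g‖ = 0`.
    have : Nonempty {s | ∃ c ρ h, IsHDecomp d q' p' α' f c ρ h ∧
        s = ∑' n, ENNReal.ofReal ‖c n‖} := by
      obtain ⟨c, ρ, h, H⟩ := hf
      exact ⟨⟨_, c, ρ, h, H, rfl⟩⟩
    rw [HNorm, sInf_eq_iInf', ENNReal.mul_iInf fun h => absurd h hgf]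
    refine le_iInf ?_
    rintro ⟨_, c, ρ, h, H, rfl⟩
    rw [ofReal_norm]
    exact (enorm_integral_le_lintegral_enorm _).trans (H.lintegral_mul_le hqq' hpp' hαα' hg)
  · rw [← integral_add (key g₁ hg₁ hgf₁ f hf) (key g₂ hg₂ hgf₂ f hf)]
    simp only [Pi.add_apply, mul_add]
  · rw [← integral_const_mul]
    simp only [Pi.smul_apply, smul_eq_mul, mul_left_comm]
end
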